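/- arXiv:2109.01623 — 4 statements merged into one kernel-verified Lean document; each statement's English description precedes it below -/
import Mathlib

section
/- Let n = 2, l = m = p = 1, G(x) = x_1, H(x) = x_2, h(x) = x_2² − x_1, g(x) = 0, and x̄ = (0,0). Then MPVC-GCQ does not hold at x̄, but GCQ for NLP(0) holds at x̄. -/
/-!
The curve `x₀ = x₁²` meets `x₁ ≥ 0`, `x₀ x₁ ≤ 0` only at the origin, because these force `x₁³ ≤ 0`.
It also meets `x₁ = 0` only there. So both feasible sets are `{0}`, with tangent cone `{0}` and polar
cone the whole plane. The gradients at the origin are `∇G = e₀`, `∇H = e₁`, `∇h = -e₀`, `∇g = 0`.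
Hence the MPVC-linearized cone contains `e₁`, so its polar excludes `e₁`, and MPVC-GCQ fails. The
linearized cone of NLP(0) requires `d₀ = d₁ = 0`, so it equals `{0}` and GCQ holds.
-/

open Set Filter RealInnerProductSpace

noncomputable section

abbrev Rn (n : ℕ) := EuclideanSpace ℝ (Fin n)

/-- The tangent cone (Bouligand) to a set `F` at a point `x`. -/
def tangentCone' {n : ℕ} (F : Set (Rn n)) (x : Rn n) : Set (Rn n) :=
  {d | ∃ (xk : ℕ → Rn n) (tk : ℕ → ℝ),
    (∀ k, xk k ∈ F) ∧ (∀ k, 0 < tk k) ∧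
    Tendsto xk atTop (nhds x) ∧ Tendsto tk atTop (nhds 0) ∧
    Tendsto (fun k => (tk k)⁻¹ • (xk k - x)) atTop (nhds d)}

/-- The polar cone of a set. -/
def polarCone {n : ℕ} (C : Set (Rn n)) : Set (Rn n) :=
  {d | ∀ y ∈ C, ⟪d, y⟫ ≤ 0}

/-- α ∈ {0,1}^p -/
def IsBinaryVec {p : ℕ} (α : Fin p → ℝ) : Prop := ∀ i, α i = 0 ∨ α i = 1

/-- d ∈ [0,1]^p -/
def IsUnitIntervalVec {p : ℕ} (d : Fin p → ℝ) : Prop := ∀ i, d i ∈ Set.Icc (0:ℝ) 1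

variable {n l m p : ℕ}

/-- The feasible set of the MPVC. -/
def MpvcFeasible (g : Fin l → Rn n → ℝ) (h : Fin m → Rn n → ℝ)
    (G H : Fin p → Rn n → ℝ) : Set (Rn n) :=
  {x | (∀ i, g i x ≤ 0) ∧ (∀ i, h i x = 0) ∧ (∀ i, 0 ≤ H i x) ∧
    (∀ i, G i x * H i x ≤ 0)}

/-- The MPVC-linearized tangent cone at xb. -/
def MpvcLinCone (g : Fin l → Rn n → ℝ) (h : Fin m → Rn n → ℝ)
    (G H : Fin p → Rn n → ℝ) (xb : Rn n) : Set (Rn n) :=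
  {d | (∀ i, g i xb = 0 → ⟪gradient (g i) xb, d⟫ ≤ 0) ∧
    (∀ i, ⟪gradient (h i) xb, d⟫ = 0) ∧
    (∀ i, G i xb = 0 → 0 < H i xb → ⟪gradient (G i) xb, d⟫ ≤ 0) ∧
    (∀ i, 0 < G i xb → H i xb = 0 → ⟪gradient (H i) xb, d⟫ = 0) ∧
    (∀ i, (G i xb = 0 ∧ H i xb = 0) ∨ (G i xb < 0 ∧ H i xb = 0) →
      0 ≤ ⟪gradient (H i) xb, d⟫) ∧
    (∀ i, G i xb = 0 → H i xb = 0 →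
      ⟪gradient (G i) xb, d⟫ * ⟪gradient (H i) xb, d⟫ ≤ 0)}

/-- The weak stationarity system of the MPVC for given multipliers. -/
def MpvcWeakMult (f : Rn n → ℝ) (g : Fin l → Rn n → ℝ) (h : Fin m → Rn n → ℝ)
    (G H : Fin p → Rn n → ℝ) (xb : Rn n)
    (lam : Fin l → ℝ) (eta : Fin m → ℝ) (mu nu : Fin p → ℝ) : Prop :=
  gradient f xb + ∑ i, lam i • gradient (g i) xb + ∑ i, eta i • gradient (h i) xb
    + ∑ i, mu i • gradient (G i) xb - ∑ i, nu i • gradient (H i) xb = 0 ∧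
  (∀ i, g i xb = 0 → 0 ≤ lam i) ∧ (∀ i, g i xb ≠ 0 → lam i = 0) ∧
  (∀ i, (0 < G i xb ∧ H i xb = 0) ∨ (G i xb < 0 ∧ H i xb = 0) ∨
    (G i xb < 0 ∧ 0 < H i xb) → mu i = 0) ∧
  (∀ i, (G i xb = 0 ∧ 0 < H i xb) ∨ (G i xb = 0 ∧ H i xb = 0) → 0 ≤ mu i) ∧
  (∀ i, (G i xb = 0 ∧ 0 < H i xb) ∨ (G i xb < 0 ∧ 0 < H i xb) → nu i = 0) ∧
  (∀ i, G i xb < 0 → H i xb = 0 → 0 ≤ nu i)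

/-- A_α-stationarity for the MPVC. -/
def MpvcAStat (f : Rn n → ℝ) (g : Fin l → Rn n → ℝ) (h : Fin m → Rn n → ℝ)
    (G H : Fin p → Rn n → ℝ) (xb : Rn n) (α : Fin p → ℝ) : Prop :=
  ∃ lam eta mu nu, MpvcWeakMult f g h G H xb lam eta mu nu ∧
    (∀ i, G i xb = 0 → H i xb = 0 → α i = 0 → mu i = 0) ∧
    (∀ i, G i xb = 0 → H i xb = 0 → α i = 1 → 0 ≤ nu i)

/-- P_α-stationarity for the MPVC. -/
def MpvcPStat (f : Rn n → ℝ) (g : Fin l → Rn n → ℝ) (h : Fin m → Rn n → ℝ)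
    (G H : Fin p → Rn n → ℝ) (xb : Rn n) (α : Fin p → ℝ) : Prop :=
  ∃ lam eta mu nu, MpvcWeakMult f g h G H xb lam eta mu nu ∧
    (∀ i, G i xb = 0 → H i xb = 0 → α i = 0 → mu i = 0) ∧
    (∀ i, G i xb = 0 → H i xb = 0 → α i = 1 →
      (mu i = 0 ∧ 0 ≤ nu i) ∨ nu i = 0)

/-- C_d-stationarity for the MPVC. -/
def MpvcCStat (f : Rn n → ℝ) (g : Fin l → Rn n → ℝ) (h : Fin m → Rn n → ℝ)
    (G H : Fin p → Rn n → ℝ) (xb : Rn n) (d : Fin p → ℝ) : Prop :=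
  ∃ lam eta mu nu, MpvcWeakMult f g h G H xb lam eta mu nu ∧
    (∀ i, G i xb = 0 → H i xb = 0 →
      (mu i = 0 ∧ 0 ≤ nu i) ∨ (1 - d i) * mu i = -(d i * nu i))

/-- M-stationarity for the MPVC. -/
def MpvcMStat (f : Rn n → ℝ) (g : Fin l → Rn n → ℝ) (h : Fin m → Rn n → ℝ)
    (G H : Fin p → Rn n → ℝ) (xb : Rn n) : Prop :=
  ∃ lam eta mu nu, MpvcWeakMult f g h G H xb lam eta mu nu ∧
    (∀ i, G i xb = 0 → H i xb = 0 → mu i * nu i = 0)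

/-- The feasible set of the branch problem NLP(0) associated with xb. -/
def MpvcNlp0Feasible (g : Fin l → Rn n → ℝ) (h : Fin m → Rn n → ℝ)
    (G H : Fin p → Rn n → ℝ) (xb : Rn n) : Set (Rn n) :=
  {x | (∀ i, g i x ≤ 0) ∧ (∀ i, h i x = 0) ∧
    (∀ i, (0 < G i xb ∧ H i xb = 0) ∨ (G i xb = 0 ∧ H i xb = 0) → H i x = 0) ∧
    (∀ i, (G i xb < 0 ∧ H i xb = 0) ∨ (G i xb < 0 ∧ 0 < H i xb) ∨
      (G i xb = 0 ∧ 0 < H i xb) → G i x ≤ 0 ∧ 0 ≤ H i x)}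

/-- The standard linearization cone of NLP(0) at xb. -/
def MpvcNlp0LinCone (g : Fin l → Rn n → ℝ) (h : Fin m → Rn n → ℝ)
    (G H : Fin p → Rn n → ℝ) (xb : Rn n) : Set (Rn n) :=
  {d | (∀ i, g i xb = 0 → ⟪gradient (g i) xb, d⟫ ≤ 0) ∧
    (∀ i, ⟪gradient (h i) xb, d⟫ = 0) ∧
    (∀ i, (0 < G i xb ∧ H i xb = 0) ∨ (G i xb = 0 ∧ H i xb = 0) →
      ⟪gradient (H i) xb, d⟫ = 0) ∧
    (∀ i, G i xb = 0 → 0 < H i xb → ⟪gradient (G i) xb, d⟫ ≤ 0) ∧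
    (∀ i, G i xb < 0 → H i xb = 0 → 0 ≤ ⟪gradient (H i) xb, d⟫)}
/-- data of Example (part 1): n = 2, l = m = p = 1,
G(x) = x₁, H(x) = x₂, h(x) = x₂² − x₁, g(x) = 0, x̄ = (0,0). -/
def Gex : Fin 1 → Rn 2 → ℝ := fun _ x => x 0
def Hex : Fin 1 → Rn 2 → ℝ := fun _ x => x 1
def hex12 : Fin 1 → Rn 2 → ℝ := fun _ x => (x 1) ^ 2 - x 0
def gex12 : Fin 1 → Rn 2 → ℝ := fun _ _ => 0
def xbex : Rn 2 := 0

theorem inner_gradient_of_hasFDerivAt {f : Rn 2 → ℝ} {L : Rn 2 →L[ℝ] ℝ} {x : Rn 2}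
    (hf : HasFDerivAt f L x) (d : Rn 2) : ⟪gradient f x, d⟫ = L d := by
  rw [hf.hasGradientAt.gradient, InnerProductSpace.toDual_symm_apply]

theorem hasFDerivAt_coord (i : Fin 2) (x : Rn 2) :
    HasFDerivAt (fun y : Rn 2 => y i) (EuclideanSpace.proj i : Rn 2 →L[ℝ] ℝ) x :=
  (EuclideanSpace.proj i : Rn 2 →L[ℝ] ℝ).hasFDerivAt

theorem inner_gradient_Gex (i : Fin 1) (d : Rn 2) : ⟪gradient (Gex i) xbex, d⟫ = d 0 :=
  inner_gradient_of_hasFDerivAt (hasFDerivAt_coord 0 xbex) d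

theorem inner_gradient_Hex (i : Fin 1) (d : Rn 2) : ⟪gradient (Hex i) xbex, d⟫ = d 1 :=
  inner_gradient_of_hasFDerivAt (hasFDerivAt_coord 1 xbex) d

theorem inner_gradient_hex12 (i : Fin 1) (d : Rn 2) :
    ⟪gradient (hex12 i) xbex, d⟫ = -d 0 := by
  have h := ((hasFDerivAt_coord 1 xbex).pow 2).sub (hasFDerivAt_coord 0 xbex)
  refine (inner_gradient_of_hasFDerivAt h d).trans ?_
  simp [xbex]

theorem inner_gradient_gex12 (i : Fin 1) (d : Rn 2) : ⟪gradient (gex12 i) xbex, d⟫ = 0 :=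
  inner_gradient_of_hasFDerivAt (hasFDerivAt_const (0 : ℝ) xbex) d

theorem mpvcFeasible_example : MpvcFeasible gex12 hex12 Gex Hex = {0} := by
  ext x
  simp only [MpvcFeasible, gex12, hex12, Gex, Hex, mem_ofPred_eq, mem_singleton_iff]
  constructor
  · rintro ⟨-, h, hH, hGH⟩
    have h := h 0
    have hH := hH 0
    have hGH := hGH 0
    have h0 : x 0 = x 1 ^ 2 := by linarith
    have h1 : x 1 = 0 := by
      by_contra hne
      have hpos : 0 < x 1 := lt_of_le_of_ne hH (Ne.symm hne)
      rw [h0] at hGH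
      have : 0 < x 1 ^ 2 * x 1 := by positivity
      linarith
    ext i
    fin_cases i <;> simp [h0, h1]
  · rintro rfl
    simp

theorem mpvcNlp0Feasible_example : MpvcNlp0Feasible gex12 hex12 Gex Hex xbex = {0} := by
  ext x
  simp only [MpvcNlp0Feasible, gex12, hex12, Gex, Hex, xbex, mem_ofPred_eq, mem_singleton_iff]
  constructor
  · rintro ⟨-, h, hH, -⟩
    have h := h 0
    have h1 : x 1 = 0 := hH 0 (by simp)
    have h0 : x 0 = 0 := by
      rw [h1] at h
      linarith
    ext i
    fin_cases i <;> simp [h0, h1]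
  · rintro rfl
    simp

theorem tangentCone'_singleton_zero : tangentCone' ({0} : Set (Rn 2)) xbex = {0} := by
  ext d
  simp only [tangentCone', xbex, mem_ofPred_eq, mem_singleton_iff]
  constructor
  · rintro ⟨xk, tk, hx, -, -, -, hd⟩
    simp only [hx, sub_zero, smul_zero] at hd
    exact tendsto_nhds_unique hd tendsto_const_nhds
  · rintro rfl
    refine ⟨fun _ => 0, fun k => 1 / ((k : ℝ) + 1), fun _ => rfl, fun k => by positivity,
      tendsto_const_nhds, tendsto_one_div_add_atTop_nhds_zero_nat, ?_⟩
    simp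

theorem mpvcNlp0LinCone_example : MpvcNlp0LinCone gex12 hex12 Gex Hex xbex = {0} := by
  ext d
  simp only [MpvcNlp0LinCone, inner_gradient_Gex, inner_gradient_Hex, inner_gradient_hex12,
    inner_gradient_gex12, mem_ofPred_eq, mem_singleton_iff]
  constructor
  · rintro ⟨-, h, hH, -, -⟩
    have h0 : d 0 = 0 := neg_eq_zero.mp (h 0)
    have h1 : d 1 = 0 := hH 0 (by simp [Gex, Hex, xbex])
    ext i
    fin_cases i <;> simp [h0, h1]
  · rintro rfl
    simp

theorem single_one_mem_mpvcLinCone :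
    EuclideanSpace.single 1 1 ∈ MpvcLinCone gex12 hex12 Gex Hex xbex := by
  simp only [MpvcLinCone, inner_gradient_Gex, inner_gradient_Hex, inner_gradient_hex12,
    inner_gradient_gex12]
  simp [Gex, xbex]

/-- MPVC-GCQ fails at x̄, but GCQ for NLP(0) holds at x̄. -/
theorem mpvc_example_not_gcq_but_nlp0_gcq :
    ¬ (polarCone (tangentCone' (MpvcFeasible gex12 hex12 Gex Hex) xbex)
        = polarCone (MpvcLinCone gex12 hex12 Gex Hex xbex)) ∧
    polarCone (tangentCone' (MpvcNlp0Feasible gex12 hex12 Gex Hex xbex) xbex)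
      = polarCone (MpvcNlp0LinCone gex12 hex12 Gex Hex xbex) := by
  rw [mpvcFeasible_example, mpvcNlp0Feasible_example, tangentCone'_singleton_zero,
    mpvcNlp0LinCone_example]
  refine ⟨fun heq => ?_, rfl⟩
  have hmem : (EuclideanSpace.single 1 1 : Rn 2) ∈ polarCone ({0} : Set (Rn 2)) := by
    simp [polarCone]
  rw [heq] at hmem
  have hle := hmem _ single_one_mem_mpvcLinCone
  norm_num at hle
end
end

section
/- Let n = 2, l = m = p = 1, G(x) = x_1, H(x) = x_2, h(x) = x_1² − x_2, g(x) = x_1, and x̄ = (0,0). Then MPVC-GCQ holds at x̄, but GCQ for NLP(0) does not hold at x̄. -/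
/-!
At the origin both gradients `∇g = ∇G` and `∇H = -∇h` are coordinate vectors, so the linearized
cone of the MPVC and that of NLP(0) are both the ray `{d | d₁ ≤ 0, d₂ = 0}`.

The MPVC feasible set is the half-parabola `{x | x₁ ≤ 0, x₂ = x₁²}`, whose tangent cone at the
origin is that same ray: the curve `(t d₁, t² d₁²)` realizes each direction, and conversely
`x₂ / t = (x₁ / t) x₁ → 0` along tangent sequences. So the two cones, and hence their polars,
agree. NLP(0) additionally forces `x₂ = 0`, which leaves only the origin; its tangent cone is
`{0}`, whose polar is the whole plane, while `(-1, 0)` is not in the polar of the ray.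
-/

open Set Filter RealInnerProductSpace

noncomputable section

variable {n l m p : ℕ}

def hex13 : Fin 1 → Rn 2 → ℝ := fun _ x => (x 0) ^ 2 - x 1
def gex13 : Fin 1 → Rn 2 → ℝ := fun _ x => x 0
theorem gradient_coord_inner (j : Fin 2) (x d : Rn 2) :
    ⟪gradient (fun y : Rn 2 => y j) x, d⟫ = d j := by
  have hj : HasFDerivAt (fun y : Rn 2 => y j) (EuclideanSpace.proj j : Rn 2 →L[ℝ] ℝ) x :=
    (EuclideanSpace.proj j : Rn 2 →L[ℝ] ℝ).hasFDerivAt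
  rw [gradient, InnerProductSpace.toDual_symm_apply, hj.fderiv]
  rfl

theorem gradient_hex13_inner (i : Fin 1) (d : Rn 2) :
    ⟪gradient (hex13 i) xbex, d⟫ = -d 1 := by
  have hc (j : Fin 2) :
      HasFDerivAt (fun y : Rn 2 => y j) (EuclideanSpace.proj j : Rn 2 →L[ℝ] ℝ) xbex :=
    (EuclideanSpace.proj j : Rn 2 →L[ℝ] ℝ).hasFDerivAt
  have hh : HasFDerivAt (hex13 i) _ xbex := ((hc 0).pow 2).sub (hc 1)
  rw [gradient, InnerProductSpace.toDual_symm_apply, hh.fderiv]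
  simp [xbex]

/-- The ray `{d | d₁ ≤ 0, d₂ = 0}`. -/
def negRay : Set (Rn 2) := {d | d 0 ≤ 0 ∧ d 1 = 0}

theorem mpvcLinCone_eq : MpvcLinCone gex13 hex13 Gex Hex xbex = negRay := by
  have hg (i : Fin 1) (d : Rn 2) : ⟪gradient (gex13 i) xbex, d⟫ = d 0 :=
    gradient_coord_inner 0 xbex d
  have hG (i : Fin 1) (d : Rn 2) : ⟪gradient (Gex i) xbex, d⟫ = d 0 :=
    gradient_coord_inner 0 xbex d
  have hH (i : Fin 1) (d : Rn 2) : ⟪gradient (Hex i) xbex, d⟫ = d 1 :=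
    gradient_coord_inner 1 xbex d
  ext d
  simp only [MpvcLinCone, negRay, mem_ofPred_eq, hg, hG, hH, gradient_hex13_inner]
  simp only [gex13, Gex, Hex, xbex, PiLp.zero_apply]
  constructor
  · rintro ⟨h1, h2, -⟩
    exact ⟨h1 0 trivial, neg_eq_zero.mp (h2 0)⟩
  · rintro ⟨h1, h2⟩
    simp [h1, h2]

theorem mpvcNlp0LinCone_eq : MpvcNlp0LinCone gex13 hex13 Gex Hex xbex = negRay := by
  have hg (i : Fin 1) (d : Rn 2) : ⟪gradient (gex13 i) xbex, d⟫ = d 0 :=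
    gradient_coord_inner 0 xbex d
  have hG (i : Fin 1) (d : Rn 2) : ⟪gradient (Gex i) xbex, d⟫ = d 0 :=
    gradient_coord_inner 0 xbex d
  have hH (i : Fin 1) (d : Rn 2) : ⟪gradient (Hex i) xbex, d⟫ = d 1 :=
    gradient_coord_inner 1 xbex d
  ext d
  simp only [MpvcNlp0LinCone, negRay, mem_ofPred_eq, hg, hG, hH, gradient_hex13_inner]
  simp only [gex13, Gex, Hex, xbex, PiLp.zero_apply]
  constructor
  · rintro ⟨h1, h2, -⟩
    exact ⟨h1 0 trivial, neg_eq_zero.mp (h2 0)⟩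
  · rintro ⟨h1, h2⟩
    simp [h1, h2]

theorem mem_mpvcFeasible_iff (x : Rn 2) :
    x ∈ MpvcFeasible gex13 hex13 Gex Hex ↔ x 0 ≤ 0 ∧ x 1 = x 0 ^ 2 := by
  simp only [MpvcFeasible, mem_ofPred_eq, gex13, hex13, Gex, Hex]
  constructor
  · rintro ⟨h1, h2, -⟩
    exact ⟨h1 0, by linarith [h2 0]⟩
  · rintro ⟨h1, h2⟩
    have h3 : 0 ≤ x 1 := h2 ▸ sq_nonneg _
    exact ⟨fun _ => h1, fun _ => by linarith, fun _ => h3,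
      fun _ => mul_nonpos_of_nonpos_of_nonneg h1 h3⟩

theorem mpvcNlp0Feasible_eq : MpvcNlp0Feasible gex13 hex13 Gex Hex xbex = {0} := by
  ext x
  simp only [MpvcNlp0Feasible, mem_ofPred_eq, mem_singleton_iff, gex13, hex13, Gex, Hex, xbex,
    PiLp.zero_apply]
  constructor
  · rintro ⟨-, h2, h3, -⟩
    have hx1 : x 1 = 0 := h3 0 (Or.inr ⟨trivial, trivial⟩)
    have hx0 : x 0 = 0 := by
      have := h2 0
      rw [hx1, sub_zero] at this
      exact pow_eq_zero_iff two_ne_zero |>.mp this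
    ext j
    fin_cases j
    · exact hx0
    · exact hx1
  · rintro rfl
    simp

theorem tendsto_coord {u : ℕ → Rn 2} {a : Rn 2} (hu : Tendsto u atTop (nhds a)) (j : Fin 2) :
    Tendsto (fun k => u k j) atTop (nhds (a j)) :=
  ((EuclideanSpace.proj j : Rn 2 →L[ℝ] ℝ).continuous.tendsto a).comp hu

theorem tangentCone_mpvcFeasible_eq :
    tangentCone' (MpvcFeasible gex13 hex13 Gex Hex) xbex = negRay := by
  ext d
  constructor
  · rintro ⟨xk, tk, hF, ht, hx, -, hd⟩
    have hd0 := tendsto_coord hd 0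
    have hd1 := tendsto_coord hd 1
    have hx0 := tendsto_coord hx 0
    simp only [xbex, sub_zero, PiLp.smul_apply, smul_eq_mul, PiLp.zero_apply] at hd0 hd1 hx0
    refine ⟨le_of_tendsto' hd0 fun k => ?_, ?_⟩
    · exact mul_nonpos_of_nonneg_of_nonpos (inv_nonneg.mpr (ht k).le)
        ((mem_mpvcFeasible_iff _).mp (hF k)).1
    · -- On the parabola `x₂ / t = (x₁ / t) * x₁`, a product of a bounded and a null sequence.
      have hprod := hd0.mul hx0
      rw [mul_zero] at hprod
      refine tendsto_nhds_unique hd1 (hprod.congr fun k => ?_)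
      rw [((mem_mpvcFeasible_iff _).mp (hF k)).2]
      ring
  · rintro ⟨h0, h1⟩
    have ht : Tendsto (fun k : ℕ => 1 / ((k : ℝ) + 1)) atTop (nhds 0) :=
      tendsto_one_div_add_atTop_nhds_zero_nat
    have hpos (k : ℕ) : (0 : ℝ) < 1 / ((k : ℝ) + 1) := by positivity
    -- The velocity of the curve `t ↦ (t d₁, t² d₁²)` at `0` is `(d₁, 0) = d`.
    have hdiff : Tendsto (fun k : ℕ => d + (1 / ((k : ℝ) + 1)) • !₂[(0 : ℝ), d 0 ^ 2])
        atTop (nhds d) := by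
      simpa using (tendsto_const_nhds (x := d)).add (ht.smul_const !₂[(0 : ℝ), d 0 ^ 2])
    refine ⟨fun k => (1 / ((k : ℝ) + 1)) • (d + (1 / ((k : ℝ) + 1)) • !₂[(0 : ℝ), d 0 ^ 2]),
      fun k => 1 / ((k : ℝ) + 1), fun k => ?_, hpos, ?_, ht, ?_⟩
    · rw [mem_mpvcFeasible_iff]
      constructor
      · simpa using mul_nonpos_of_nonneg_of_nonpos (hpos k).le h0
      · simp [h1]
        ring
    · simpa [xbex] using ht.smul hdiff
    · refine hdiff.congr fun k => ?_
      rw [xbex, sub_zero, inv_smul_smul₀ (ne_of_gt (hpos k))]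

/-- MPVC-GCQ holds at x̄, but GCQ for NLP(0) fails at x̄. -/
theorem mpvc_example_gcq_but_not_nlp0_gcq :
    polarCone (tangentCone' (MpvcFeasible gex13 hex13 Gex Hex) xbex)
      = polarCone (MpvcLinCone gex13 hex13 Gex Hex xbex) ∧
    ¬ (polarCone (tangentCone' (MpvcNlp0Feasible gex13 hex13 Gex Hex xbex) xbex)
        = polarCone (MpvcNlp0LinCone gex13 hex13 Gex Hex xbex)) := by
  rw [tangentCone_mpvcFeasible_eq, mpvcLinCone_eq, mpvcNlp0LinCone_eq, mpvcNlp0Feasible_eq]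
  refine ⟨rfl, fun h => ?_⟩
  -- `(-1, 0)` lies in the polar of the tangent cone `{0}` and in the ray itself.
  have hmem : (!₂[-1, 0] : Rn 2) ∈ polarCone (tangentCone' {0} xbex) := by
    rintro y ⟨xk, tk, hF, -, -, -, hy⟩
    have hzero : (fun k => (tk k)⁻¹ • (xk k - xbex)) = fun _ => 0 := by
      funext k
      rw [mem_singleton_iff.mp (hF k), xbex, sub_zero, smul_zero]
    rw [hzero] at hy
    rw [tendsto_nhds_unique hy tendsto_const_nhds, inner_zero_right]
  rw [h] at hmem
  have hle := hmem !₂[-1, 0] ⟨by simp, by simp⟩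
  simp at hle
end
end

section
/- A feasible point x̄ of the MPVC is linearized B-stationary if and only if it is A_α-stationary for every α ∈ {0,1}^p. -/
/-!
The linearized cone is a finite union of polyhedral cones. For `i` with `G i xb = H i xb = 0`, the
conditions `0 ≤ ⟪∇H, d⟫` and `⟪∇G, d⟫ * ⟪∇H, d⟫ ≤ 0` say that either `⟪∇H, d⟫ = 0` (the branch
`α i = 0`) or `⟪∇G, d⟫ ≤ 0 ≤ ⟪∇H, d⟫` (the branch `α i = 1`). Hence `-∇f` lies in the polar of the
linearized cone iff it lies in the polar of each branch cone, and by Farkas' lemma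
(`farkas_inner`) the latter is exactly the existence of `A_α` multipliers.
-/

open Set Filter RealInnerProductSpace

noncomputable section

variable {n l m p : ℕ}

/-- **Farkas' lemma** for finitely many homogeneous inequalities. The induction removes one
inequality `⟪a j, x⟫ ≤ 0` at a time. If it is needed, some `d` satisfies the others but violates
the conclusion; projecting along `d` onto the kernel of `a j` reduces to the remaining ones. -/
lemma farkas_inner {E ι : Type*} [NormedAddCommGroup E] [InnerProductSpace ℝ E]
    (s : Finset ι) : ∀ (a : ι → E) (b : E),
    (∀ x, (∀ i ∈ s, ⟪a i, x⟫ ≤ 0) → ⟪b, x⟫ ≤ 0) →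
    ∃ c : ι → ℝ, (∀ i, 0 ≤ c i) ∧ b = ∑ i ∈ s, c i • a i := by
  classical
  induction s using Finset.induction_on with
  | empty =>
    intro a b hb
    refine ⟨fun _ => 0, fun _ => le_rfl, ?_⟩
    have := hb b (by simp)
    simpa using this
  | insert j s hj ih =>
    intro a b hb
    by_cases hs : ∀ x, (∀ i ∈ s, ⟪a i, x⟫ ≤ 0) → ⟪b, x⟫ ≤ 0
    · obtain ⟨c, hc, hbc⟩ := ih a b hs
      refine ⟨fun i => if i = j then 0 else c i, fun i => ?_, ?_⟩
      · dsimp only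
        split_ifs
        exacts [le_rfl, hc i]
      · rw [Finset.sum_insert hj, hbc]
        simp only [if_true, zero_smul, zero_add]
        refine Finset.sum_congr rfl fun i hi => ?_
        rw [if_neg (ne_of_mem_of_not_mem hi hj)]
    · push Not at hs
      obtain ⟨d, hd, hbd⟩ := hs
      have hjd : 0 < ⟪a j, d⟫ := by
        by_contra hle
        refine absurd (hb d fun i hi => ?_) (not_le.2 hbd)
        rcases Finset.mem_insert.1 hi with rfl | hi
        exacts [not_lt.1 hle, hd i hi]
      set t := ⟪a j, d⟫ with ht
      -- the projection `x ↦ x - (⟪a j, x⟫ / t) • d`, in terms of the functionals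
      obtain ⟨c, hc, hbc⟩ := ih (fun i => a i - (⟪a i, d⟫ / t) • a j) (b - (⟪b, d⟫ / t) • a j) (by
        intro x hx
        have key : ∀ v : E, ⟪v - (⟪v, d⟫ / t) • a j, x⟫ = ⟪v, x - (⟪a j, x⟫ / t) • d⟫ := by
          intro v
          simp only [inner_sub_left, inner_sub_right, real_inner_smul_left,
            real_inner_smul_right]
          ring
        rw [key]
        refine hb _ fun i hi => ?_
        rcases Finset.mem_insert.1 hi with rfl | hi
        · rw [inner_sub_right, real_inner_smul_right, ← ht, div_mul_cancel₀ _ hjd.ne', sub_self]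
        · rw [← key]
          exact hx i hi)
      have hsum : ∑ i ∈ s, c i * (⟪a i, d⟫ / t) ≤ 0 :=
        Finset.sum_nonpos fun i hi =>
          mul_nonpos_of_nonneg_of_nonpos (hc i) (div_nonpos_of_nonpos_of_nonneg (hd i hi) hjd.le)
      refine ⟨fun i => if i = j then ⟪b, d⟫ / t - ∑ i ∈ s, c i * (⟪a i, d⟫ / t) else c i,
        fun i => ?_, ?_⟩
      · dsimp only
        split_ifs
        · have : 0 < ⟪b, d⟫ / t := div_pos hbd hjd
          linarith
        · exact hc i
      · rw [Finset.sum_insert hj]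
        dsimp only
        rw [if_pos rfl]
        have e : ∑ i ∈ s, (if i = j then ⟪b, d⟫ / t - ∑ i ∈ s, c i * (⟪a i, d⟫ / t) else c i) • a i
            = ∑ i ∈ s, c i • a i :=
          Finset.sum_congr rfl fun i hi => by rw [if_neg (ne_of_mem_of_not_mem hi hj)]
        rw [e, sub_smul]
        simp only [smul_sub, smul_smul, Finset.sum_sub_distrib, ← Finset.sum_smul] at hbc
        rw [sub_eq_iff_eq_add] at hbc
        refine hbc.trans ?_
        abel

/-- linearized B-stationarity ↔ A_α-stationarity for all α ∈ {0,1}^p. -/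
theorem mpvc_linearized_BStat_iff_AStat_all {n l m p : ℕ} (f : Rn n → ℝ) (g : Fin l → Rn n → ℝ)
    (h : Fin m → Rn n → ℝ) (G H : Fin p → Rn n → ℝ) (xb : Rn n)
    (hf : Differentiable ℝ f) (hg : ∀ i, Differentiable ℝ (g i))
    (hh : ∀ i, Differentiable ℝ (h i)) (hG : ∀ i, Differentiable ℝ (G i))
    (hH : ∀ i, Differentiable ℝ (H i))
    (hfeas : xb ∈ MpvcFeasible g h G H) :
    -gradient f xb ∈ polarCone (MpvcLinCone g h G H xb) ↔
      ∀ α : Fin p → ℝ, IsBinaryVec α → MpvcAStat f g h G H xb α := by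
  classical
  obtain ⟨-, -, hHn, hGH⟩ := hfeas
  constructor
  · intro hB α hα
    -- Indicators of the constraints active in the branch `α`: `⟪∇g, d⟫ ≤ 0`, `⟪∇G, d⟫ ≤ 0`,
    -- `0 ≤ ⟪∇H, d⟫`, and `⟪∇H, d⟫ ≤ 0` (the last turning the third into an equality).
    let tg : Fin l → ℝ := fun i => if g i xb = 0 then 1 else 0
    let tG : Fin p → ℝ := fun i => if G i xb = 0 ∧ (0 < H i xb ∨ α i = 1) then 1 else 0
    let tH : Fin p → ℝ := fun i => if H i xb = 0 then 1 else 0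
    let tE : Fin p → ℝ := fun i =>
      if H i xb = 0 ∧ (0 < G i xb ∨ G i xb = 0 ∧ α i = 0) then 1 else 0
    let a : Fin l ⊕ Fin m ⊕ Fin m ⊕ Fin p ⊕ Fin p ⊕ Fin p → Rn n :=
      Sum.elim (fun i => tg i • gradient (g i) xb) <|
      Sum.elim (fun i => gradient (h i) xb) <|
      Sum.elim (fun i => -gradient (h i) xb) <|
      Sum.elim (fun i => tG i • gradient (G i) xb) <|
      Sum.elim (fun i => -(tH i • gradient (H i) xb)) (fun i => tE i • gradient (H i) xb)
    obtain ⟨c, hc, hbc⟩ := farkas_inner Finset.univ a (-gradient f xb) (by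
      intro d hd
      refine hB d ?_
      simp only [Finset.mem_univ, true_imp_iff, Sum.forall, a, Sum.elim_inl, Sum.elim_inr,
        inner_neg_left, real_inner_smul_left, tg, tG, tH, tE] at hd
      obtain ⟨d1, d2, d3, d4, d5, d6⟩ := hd
      refine ⟨fun i hi => ?_, fun i => ?_, fun i hi hi' => ?_, fun i hi hi' => ?_,
        fun i hi => ?_, fun i hi hi' => ?_⟩
      · simpa [hi] using d1 i
      · linarith [d2 i, d3 i]
      · simpa [hi, hi'] using d4 i
      · have h5 := d5 i
        have h6 := d6 i
        simp only [hi, hi', true_and, true_or, if_true, one_mul] at h5 h6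
        linarith
      · have hH0 : H i xb = 0 := by tauto
        simpa [hH0] using d5 i
      · have h5 := d5 i
        simp only [hi', if_true, one_mul] at h5
        rcases hα i with h0 | h1
        · have h6 := d6 i
          simp only [hi, hi', h0, or_true, if_true, one_mul, and_self] at h6
          have : ⟪gradient (H i) xb, d⟫ = 0 := by linarith
          simp [this]
        · have h4 := d4 i
          simp only [hi, h1, true_and, or_true, if_true, one_mul] at h4
          exact mul_nonpos_of_nonpos_of_nonneg h4 (by linarith))
    simp only [Fintype.sum_sum_type, a, Sum.elim_inl, Sum.elim_inr, smul_neg, smul_smul,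
      Finset.sum_neg_distrib] at hbc
    refine ⟨fun i => c (.inl i) * tg i, fun i => c (.inr (.inl i)) - c (.inr (.inr (.inl i))),
      fun i => c (.inr (.inr (.inr (.inl i)))) * tG i,
      fun i => c (.inr (.inr (.inr (.inr (.inl i))))) * tH i
        - c (.inr (.inr (.inr (.inr (.inr i))))) * tE i,
      ⟨?_, fun i hi => ?_, fun i hi => ?_, fun i hi => ?_, fun i hi => ?_, fun i hi => ?_,
        fun i hi hi' => ?_⟩, fun i hi hi' h0 => ?_, fun i hi hi' h1 => ?_⟩
    · simp only [sub_smul, Finset.sum_sub_distrib]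
      rw [← neg_neg (gradient f xb), hbc]
      abel
    · exact mul_nonneg (hc _) (by simp [tg, hi])
    · simp [tg, hi]
    · rcases hi with ⟨h1, -⟩ | ⟨h1, -⟩ | ⟨h1, -⟩
      exacts [by simp [tG, h1.ne'], by simp [tG, h1.ne], by simp [tG, h1.ne]]
    · exact mul_nonneg (hc _) (by simp only [tG]; split_ifs <;> norm_num)
    · have hH0 : H i xb ≠ 0 := by rcases hi with ⟨-, h2⟩ | ⟨-, h2⟩ <;> exact h2.ne'
      simp [tH, tE, hH0]
    · have := hc (.inr (.inr (.inr (.inr (.inl i)))))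
      simpa [tH, tE, hi', hi.ne, hi.not_gt] using this
    · simp [tG, hi', h0]
    · have := hc (.inr (.inr (.inr (.inr (.inl i)))))
      simpa [tH, tE, hi, hi', h1] using this
  · intro hA d hd
    obtain ⟨d1, d2, d3, d4, d5, d6⟩ := hd
    -- the branch containing `d`
    obtain ⟨lam, eta, mu, nu, ⟨heq, w1, w2, w3, w4, w5, w6⟩, a0, a1⟩ :=
      hA (fun i => if ⟪gradient (H i) xb, d⟫ = 0 then 0 else 1) (fun i => by
        by_cases hi : ⟪gradient (H i) xb, d⟫ = 0
        exacts [.inl (if_pos hi), .inr (if_neg hi)])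
    have e := congrArg (fun v => ⟪v, d⟫) heq
    simp only [inner_sub_left, inner_add_left, sum_inner, real_inner_smul_left,
      inner_zero_left] at e
    rw [inner_neg_left]
    have s1 : ∑ i, lam i * ⟪gradient (g i) xb, d⟫ ≤ 0 := Finset.sum_nonpos fun i _ => by
      by_cases hi : g i xb = 0
      · exact mul_nonpos_of_nonneg_of_nonpos (w1 i hi) (d1 i hi)
      · simp [w2 i hi]
    have s2 : ∑ i, eta i * ⟪gradient (h i) xb, d⟫ = 0 :=
      Finset.sum_eq_zero fun i _ => by simp [d2 i]
    have s3 : ∑ i, mu i * ⟪gradient (G i) xb, d⟫ ≤ 0 := Finset.sum_nonpos fun i _ => by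
      rcases (hHn i).eq_or_lt with hi | hi
      · rcases lt_trichotomy (G i xb) 0 with hi' | hi' | hi'
        · simp [w3 i (.inr (.inl ⟨hi', hi.symm⟩))]
        · by_cases hz : ⟪gradient (H i) xb, d⟫ = 0
          · simp [a0 i hi' hi.symm (if_pos hz)]
          · have hpos := lt_of_le_of_ne (d5 i (.inl ⟨hi', hi.symm⟩)) (Ne.symm hz)
            exact mul_nonpos_of_nonneg_of_nonpos (w4 i (.inr ⟨hi', hi.symm⟩))
              (nonpos_of_mul_nonpos_left (d6 i hi' hi.symm) hpos)
        · simp [w3 i (.inl ⟨hi', hi.symm⟩)]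
      · rcases (nonpos_of_mul_nonpos_left (hGH i) hi).lt_or_eq with hi' | hi'
        · simp [w3 i (.inr (.inr ⟨hi', hi⟩))]
        · exact mul_nonpos_of_nonneg_of_nonpos (w4 i (.inl ⟨hi', hi⟩)) (d3 i hi' hi)
    have s4 : 0 ≤ ∑ i, nu i * ⟪gradient (H i) xb, d⟫ := Finset.sum_nonneg fun i _ => by
      rcases (hHn i).eq_or_lt with hi | hi
      · rcases lt_trichotomy (G i xb) 0 with hi' | hi' | hi'
        · exact mul_nonneg (w6 i hi' hi.symm) (d5 i (.inr ⟨hi', hi.symm⟩))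
        · by_cases hz : ⟪gradient (H i) xb, d⟫ = 0
          · simp [hz]
          · exact mul_nonneg (a1 i hi' hi.symm (if_neg hz)) (d5 i (.inl ⟨hi', hi.symm⟩))
        · simp [d4 i hi' hi.symm]
      · rcases (nonpos_of_mul_nonpos_left (hGH i) hi).lt_or_eq with hi' | hi'
        · simp [w5 i (.inr ⟨hi', hi⟩)]
        · simp [w5 i (.inl ⟨hi', hi⟩)]
    linarith
end
end

section
/- Suppose a feasible point x̄ of the MPVC is A_α-stationary for every α ∈ {0,1}^p, and for each i ∈ {1,…,p} let C_i ⊆ (−∞,0]×(−∞,0] be a closed, connected and unbounded set with 0 ∈ C_i. Then there exist multipliers (λ, η, μ, ν) satisfying the weak stationarity system at x̄ such that for every i ∈ I^{00}(x̄), either (μ_i = 0 and ν_i ≥ 0) or (−μ_i, ν_i) ∈ C_i. -/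
/-!
The weak multipliers at `xb` form a convex set, and A_α-stationarity puts a point `v_α` of it on
each branch `α`. Interpolating the `v_α` multilinearly over the unit cube gives a continuous map
`x ↦ (-μ(x), ν(x))` such that, at a biactive index `i`, `μ_i = 0` on the face `x_i = 0` and
`ν_i ≥ 0` on the face `x_i = 1`, while `μ_i ≥ 0` throughout.

For every `ε > 0` the set `{0} × [0, ∞) ∪ C_i` is traced up to `ε` by a curve `γ_i` coming down the
half-axis and then following `C_i` far out inside the third quadrant (`exists_trace`: thickenings
of the connected set `C_i` are open and connected, hence path connected). The `2p` equations
`(-μ_i(x), ν_i(x)) = γ_i(u_i)` in the unknowns `(x, u)` have a solution in the unit cube by the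
Poincaré–Miranda theorem: the sum of the two components changes sign between `u_i = 0` and
`u_i = 1`, and, once the sums agree, the difference of the first components changes sign between
`x_i = 0` and `x_i = 1`. Compactness lets `ε` tend to zero (`exists_weights`).

The Poincaré–Miranda theorem follows from a Sperner-type lemma on the Kuhn triangulation of a grid
(`sum_kuhnMat_det`). Let `s_i(v)` modulo two record the sign of the `i`-th function at `v`. The
determinant of the matrix `s_0 s_1 ⋯ s_{j-1}(v_k)`, over the vertices `v_k` of a simplex and
`0 ≤ j ≤ d`, vanishes if some `s_i` is constant on the simplex. Expanding along the column `j = 0`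
of ones writes it as a sum over facets; inner facets cancel in pairs, boundary facets contribute
zero except on the face `x_0 = N + 1`, where the sum is the one in dimension `d - 1`. Hence the
determinants add up to one, and on some simplex all functions change sign.
-/

open Set Filter RealInnerProductSpace

noncomputable section

variable {n l m p : ℕ}

/-! ### A Sperner lemma for the Kuhn triangulation -/

/-- The `k`-th vertex of the Kuhn simplex with base point `x` and order `ρ`: the coordinate `j` is
the `ρ j`-th one to be raised by one along the simplex. -/
def kuhnVertex {d : ℕ} (x : Fin d → ℕ) (ρ : Equiv.Perm (Fin d)) (k : ℕ) : Fin d → ℕ :=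
  fun j => x j + if (ρ j : ℕ) < k then 1 else 0

/-- The product `s₀ s₁ ⋯ s_{j-1}` of the first `j` sign bits at the lattice point `y`. -/
def stair {d : ℕ} (s : Fin d → (Fin d → ℕ) → ZMod 2) (y : Fin d → ℕ) (j : ℕ) : ZMod 2 :=
  ∏ i : Fin d with i.val < j, s i y

/-- The matrix of the products `stair s · j`, `0 ≤ j ≤ d`, at the vertices of a Kuhn simplex. -/
def kuhnMat {d : ℕ} (s : Fin d → (Fin d → ℕ) → ZMod 2) (x : Fin d → ℕ)
    (ρ : Equiv.Perm (Fin d)) : Matrix (Fin (d + 1)) (Fin (d + 1)) (ZMod 2) :=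
  Matrix.of fun k j => stair s (kuhnVertex x ρ k) j

/-- The determinant of the products `stair s · j`, `1 ≤ j ≤ d`, at the `d` points of a facet `V`. -/
def facetDet {d : ℕ} (s : Fin d → (Fin d → ℕ) → ZMod 2) (V : Fin d → Fin d → ℕ) : ZMod 2 :=
  Matrix.det (Matrix.of fun a b : Fin d => stair s (V a) (b.val + 1))

lemma stair_zero {d : ℕ} (s : Fin d → (Fin d → ℕ) → ZMod 2) (y : Fin d → ℕ) :
    stair s y 0 = 1 := by
  simp [stair]

lemma stair_succ {d : ℕ} (s : Fin d → (Fin d → ℕ) → ZMod 2) (y : Fin d → ℕ) (i : Fin d) :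
    stair s y (i.val + 1) = stair s y i.val * s i y := by
  unfold stair
  have : (Finset.univ.filter fun a : Fin d => a.val < i.val + 1)
      = insert i (Finset.univ.filter fun a : Fin d => a.val < i.val) := by
    ext a
    simp only [Finset.mem_filter, Finset.mem_univ, true_and, Finset.mem_insert, Fin.ext_iff]
    omega
  rw [this, Finset.prod_insert (by simp), mul_comm]

/-- A nonzero Kuhn determinant forces every sign bit to take both values on the simplex. -/
lemma exists_of_kuhnMat_det_ne_zero {d : ℕ} {s : Fin d → (Fin d → ℕ) → ZMod 2} {x : Fin d → ℕ}
    {ρ : Equiv.Perm (Fin d)} (hdet : (kuhnMat s x ρ).det ≠ 0) (i : Fin d) :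
    (∃ k : ℕ, s i (kuhnVertex x ρ k) = 0) ∧ ∃ k : ℕ, s i (kuhnVertex x ρ k) = 1 := by
  have two : ∀ z : ZMod 2, z ≠ 0 → z = 1 := by decide
  constructor
  · by_contra! hc
    refine hdet (Matrix.det_zero_of_column_eq (i := i.castSucc) (j := i.succ) ?_ ?_)
    · simp [Fin.ext_iff]
    · intro k
      simp [kuhnMat, stair_succ, two _ (hc k)]
  · by_contra! hc
    refine hdet (Matrix.det_eq_zero_of_column_eq_zero i.succ fun k => ?_)
    have h0 : s i (kuhnVertex x ρ k) = 0 := by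
      by_contra h
      exact hc k (two _ h)
    simp [kuhnMat, stair_succ, h0]

lemma kuhnMat_det_eq {d : ℕ} (s : Fin d → (Fin d → ℕ) → ZMod 2) (x : Fin d → ℕ)
    (ρ : Equiv.Perm (Fin d)) :
    (kuhnMat s x ρ).det
      = ∑ k : Fin (d + 1), facetDet s fun a => kuhnVertex x ρ (k.succAbove a).val := by
  rw [Matrix.det_succ_column_zero]
  refine Finset.sum_congr rfl fun k _ => ?_
  have h1 : (-1 : ZMod 2) = 1 := by decide
  have h2 : kuhnMat s x ρ k 0 = 1 := by simp [kuhnMat, stair_zero]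
  rw [h1, h2, one_pow, one_mul, one_mul]
  rfl

lemma facetDet_eq_zero_of_zero {d : ℕ} {s : Fin d → (Fin d → ℕ) → ZMod 2}
    {V : Fin d → Fin d → ℕ} (i : Fin d) (hV : ∀ a, s i (V a) = 0) : facetDet s V = 0 :=
  Matrix.det_eq_zero_of_column_eq_zero i fun k => by simp [stair_succ, hV]

lemma facetDet_eq_zero_of_one {d : ℕ} {s : Fin (d + 1) → (Fin (d + 1) → ℕ) → ZMod 2}
    {V : Fin (d + 1) → Fin (d + 1) → ℕ} (i : Fin (d + 1)) (hi : i ≠ 0)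
    (hV : ∀ a, s i (V a) = 1) : facetDet s V = 0 := by
  obtain ⟨j, rfl⟩ := Fin.exists_succ_eq.2 hi
  refine Matrix.det_zero_of_column_eq (i := j.castSucc) (j := j.succ) (by simp [Fin.ext_iff]) ?_
  intro k
  simp only [Matrix.of_apply]
  rw [stair_succ s (V k) j.succ, hV, mul_one]
  simp

/-- Facets opposite to an inner vertex cancel in pairs: exchanging the two steps around that
vertex gives the other Kuhn simplex with the same facet. -/
lemma sum_inner_facets {d : ℕ} (s : Fin (d + 1) → (Fin (d + 1) → ℕ) → ZMod 2)
    (x : Fin (d + 1) → ℕ) (k : Fin d) :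
    ∑ ρ : Equiv.Perm (Fin (d + 1)),
      facetDet s (fun a => kuhnVertex x ρ (k.castSucc.succ.succAbove a).val) = 0 := by
  have hne : k.castSucc ≠ k.succ := by simp [Fin.ext_iff]
  refine Finset.sum_involution (fun ρ _ => Equiv.swap k.castSucc k.succ * ρ) ?_ ?_ ?_ ?_
  · intro ρ _
    have : (fun a => kuhnVertex x (Equiv.swap k.castSucc k.succ * ρ)
        (k.castSucc.succ.succAbove a).val)
        = fun a => kuhnVertex x ρ (k.castSucc.succ.succAbove a).val := by
      funext a j
      have hk : (k.castSucc.succ.succAbove a).val ≠ k.val + 1 := by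
        intro h
        exact Fin.succAbove_ne k.castSucc.succ a (Fin.ext (by simpa using h))
      simp only [kuhnVertex, Equiv.Perm.mul_apply]
      congr 1
      refine if_congr ?_ rfl rfl
      rw [Equiv.swap_apply_def]
      split_ifs with h1 h2
      · rw [h1]; simp only [Fin.val_succ, Fin.val_castSucc]; omega
      · rw [h2]; simp only [Fin.val_succ, Fin.val_castSucc]; omega
      · rfl
    rw [this]
    exact CharTwo.add_self_eq_zero _
  · intro ρ _ _ h
    have := congrArg (fun σ : Equiv.Perm (Fin (d + 1)) => σ (ρ.symm k.castSucc)) h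
    simp at this
    exact hne this.symm
  · intro ρ _; exact Finset.mem_univ _
  · intro ρ _
    simp [← mul_assoc]

/-- On the face `x₀ = N + 1` the bit `s₀` is one, so a facet determinant there is the Kuhn
determinant of the remaining bits, one dimension lower. -/
lemma facet_face {d : ℕ} (N : ℕ) (s : Fin (d + 1) → (Fin (d + 1) → ℕ) → ZMod 2)
    (h1 : ∀ i x, x i = N + 1 → s i x = 1) (y : Fin d → ℕ) (e : Equiv.Perm (Fin d)) :
    facetDet s (fun a => kuhnVertex (Fin.cons N y : Fin (d + 1) → ℕ)
        (Equiv.Perm.decomposeFin.symm (0, e)) (a.val + 1))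
      = (kuhnMat (fun i z => s i.succ (Fin.cons (N + 1) z)) y e).det := by
  unfold facetDet kuhnMat
  congr 1
  ext a b
  have hv : kuhnVertex (Fin.cons N y : Fin (d + 1) → ℕ)
      (Equiv.Perm.decomposeFin.symm (0, e)) (a.val + 1)
      = (Fin.cons (N + 1) (kuhnVertex y e a) : Fin (d + 1) → ℕ) := by
    funext j
    refine Fin.cases ?_ (fun j => ?_) j
    · simp [kuhnVertex]
    · simp [kuhnVertex, Equiv.Perm.decomposeFin_symm_apply_succ]
  simp only [Matrix.of_apply]
  rw [hv]
  unfold stair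
  rw [Finset.prod_filter, Finset.prod_filter, Fin.prod_univ_succ]
  simp [h1 0 (Fin.cons (N + 1) (kuhnVertex y e a)) (by simp)]

/-- Fixing the order `ρ`, the facets opposite to the lowest vertex cancel against those opposite
to the highest vertex for the rotated order, except on the face `x_i = N + 1` of the first raised
coordinate `i`. -/
lemma sum_outer_facets {d : ℕ} (N : ℕ) (s : Fin (d + 1) → (Fin (d + 1) → ℕ) → ZMod 2)
    (h0 : ∀ i x, x i = 0 → s i x = 0) (ρ : Equiv.Perm (Fin (d + 1))) :
    ∑ x ∈ Fintype.piFinset fun _ : Fin (d + 1) => Finset.range (N + 1),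
        facetDet s (fun a => kuhnVertex x ρ (a.val + 1))
      = ∑ x ∈ (Fintype.piFinset fun _ : Fin (d + 1) => Finset.range (N + 1)) with
            x (ρ.symm 0) = N, facetDet s (fun a => kuhnVertex x ρ (a.val + 1))
        + ∑ x ∈ Fintype.piFinset fun _ : Fin (d + 1) => Finset.range (N + 1),
          facetDet s (fun a => kuhnVertex x ((finRotate (d + 1))⁻¹ * ρ) a.val) := by
  set i := ρ.symm 0 with hi
  have hρi : ρ i = 0 := by simp [hi]
  set Q := Fintype.piFinset fun _ : Fin (d + 1) => Finset.range (N + 1) with hQ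
  have hQm : ∀ x, x ∈ Q ↔ ∀ j, x j < N + 1 := by simp [hQ]
  have hrot : ∀ j, j ≠ i → (((finRotate (d + 1))⁻¹ * ρ) j : ℕ) + 1 = ρ j := by
    intro j hj
    obtain ⟨q, hq⟩ := Fin.exists_succ_eq.2 (fun h : ρ j = 0 => hj (ρ.injective (h.trans hρi.symm)))
    have : (finRotate (d + 1))⁻¹ (ρ j) = q.castSucc := by
      rw [Equiv.Perm.inv_eq_iff_eq, ← hq, finRotate_apply]
      simp
    rw [Equiv.Perm.mul_apply, this, ← hq]
    simp
  have hroti : (((finRotate (d + 1))⁻¹ * ρ) i : ℕ) = d := by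
    have : (finRotate (d + 1))⁻¹ (ρ i) = Fin.last d := by
      rw [Equiv.Perm.inv_eq_iff_eq, finRotate_last, hρi]
    rw [Equiv.Perm.mul_apply, this]
    simp
  rw [← Finset.sum_filter_add_sum_filter_not Q (fun x => x i = N)]
  congr 1
  rw [← Finset.sum_filter_add_sum_filter_not Q (fun x => x i = 0)
    (fun x => facetDet s (fun a => kuhnVertex x ((finRotate (d + 1))⁻¹ * ρ) a.val))]
  rw [Finset.sum_eq_zero (s := Q.filter fun x => x i = 0), zero_add]
  · refine Finset.sum_bij' (fun x _ => Function.update x i (x i + 1))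
      (fun x _ => Function.update x i (x i - 1)) ?_ ?_ ?_ ?_ ?_
    · intro x hx
      simp only [Finset.mem_filter, hQm] at hx ⊢
      refine ⟨fun j => ?_, by simp⟩
      by_cases hj : j = i
      · have := hx.1 i
        rw [hj, Function.update_self]
        omega
      · simpa [hj] using hx.1 j
    · intro x hx
      simp only [Finset.mem_filter, hQm] at hx ⊢
      have h2 := hx.1 i
      refine ⟨fun j => ?_, by simp only [Function.update_self]; omega⟩
      by_cases hj : j = i
      · rw [hj, Function.update_self]
        omega
      · simpa [hj] using hx.1 j
    · intro x hx; simp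
    · intro x hx
      simp only [Finset.mem_filter] at hx
      simp [Nat.sub_add_cancel (Nat.pos_of_ne_zero hx.2)]
    · intro x hx
      congr 1
      funext a j
      by_cases hj : j = i
      · rw [hj]
        simp only [kuhnVertex, Function.update_self, hroti, hρi]
        have := a.isLt
        rw [if_pos (by simp), if_neg (by omega)]
      · simp only [kuhnVertex, Function.update_of_ne hj, ← hrot j hj]
        simp
  · intro x hx
    refine facetDet_eq_zero_of_zero i fun a => h0 i _ ?_
    simp only [Finset.mem_filter] at hx
    have := a.isLt
    simp only [kuhnVertex, hroti, hx.2]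
    rw [if_neg (by omega)]

/-- A cubical Sperner lemma, in degree form: if the `i`-th sign bit vanishes on the face `x_i = 0`
and is one on the face `x_i = N + 1`, the Kuhn determinants add up to one modulo two. -/
theorem sum_kuhnMat_det (N : ℕ) : ∀ {d : ℕ} (s : Fin d → (Fin d → ℕ) → ZMod 2)
    (_ : ∀ i x, x i = 0 → s i x = 0) (_ : ∀ i x, x i = N + 1 → s i x = 1),
    ∑ x ∈ Fintype.piFinset fun _ : Fin d => Finset.range (N + 1),
      ∑ ρ : Equiv.Perm (Fin d), (kuhnMat s x ρ).det = 1 := by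
  intro d
  induction d with
  | zero =>
    intro s _ _
    simp [kuhnMat, stair]
  | succ d ih =>
    intro s h0 h1
    set Q := Fintype.piFinset fun _ : Fin (d + 1) => Finset.range (N + 1) with hQ
    have hsplit : ∀ x (ρ : Equiv.Perm (Fin (d + 1))), (kuhnMat s x ρ).det
        = facetDet s (fun a => kuhnVertex x ρ (a.val + 1))
          + (∑ k : Fin d, facetDet s (fun a => kuhnVertex x ρ (k.castSucc.succ.succAbove a).val)
            + facetDet s (fun a => kuhnVertex x ρ a.val)) := by
      intro x ρ
      rw [kuhnMat_det_eq, Fin.sum_univ_succ, Fin.sum_univ_castSucc]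
      congr 2
      · rw [Fin.succ_last]
        congr 1
        funext a
        simp
    have e1 : ∑ x ∈ Q, ∑ ρ : Equiv.Perm (Fin (d + 1)), (kuhnMat s x ρ).det
        = ∑ ρ : Equiv.Perm (Fin (d + 1)), ∑ x ∈ Q,
            facetDet s (fun a => kuhnVertex x ρ (a.val + 1))
          + ∑ ρ : Equiv.Perm (Fin (d + 1)), ∑ x ∈ Q,
            facetDet s (fun a => kuhnVertex x ρ a.val) := by
      simp only [hsplit, Finset.sum_add_distrib]
      have : ∑ x ∈ Q, ∑ ρ : Equiv.Perm (Fin (d + 1)), ∑ k : Fin d,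
          facetDet s (fun a => kuhnVertex x ρ (k.castSucc.succ.succAbove a).val) = 0 := by
        refine Finset.sum_eq_zero fun x _ => ?_
        rw [Finset.sum_comm]
        exact Finset.sum_eq_zero fun k _ => sum_inner_facets s x k
      rw [this, zero_add, Finset.sum_comm]
      congr 1
      rw [Finset.sum_comm]
    have e2 : ∑ ρ : Equiv.Perm (Fin (d + 1)), ∑ x ∈ Q,
            facetDet s (fun a => kuhnVertex x ((finRotate (d + 1))⁻¹ * ρ) a.val)
        = ∑ ρ : Equiv.Perm (Fin (d + 1)), ∑ x ∈ Q,
            facetDet s (fun a => kuhnVertex x ρ a.val) :=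
      Equiv.sum_comp (Equiv.mulLeft (finRotate (d + 1))⁻¹) fun ρ => ∑ x ∈ Q,
            facetDet s (fun a => kuhnVertex x ρ a.val)
    rw [e1, Finset.sum_congr rfl fun ρ _ => sum_outer_facets N s h0 ρ, Finset.sum_add_distrib, e2,
      add_assoc, CharTwo.add_self_eq_zero, add_zero]
    rw [← ih (fun i z => s i.succ (Fin.cons (N + 1) z))
      (fun i z hz => h0 _ _ (by simpa using hz)) (fun i z hz => h1 _ _ (by simpa using hz))]
    rw [Finset.sum_comm]
    rw [← Equiv.sum_comp Equiv.Perm.decomposeFin.symm, Fintype.sum_prod_type, Fin.sum_univ_succ]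
    -- Only orders raising the coordinate `0` first contribute on the upper faces.
    have hrest : ∀ q : Fin d, ∑ e : Equiv.Perm (Fin d),
        ∑ x ∈ Q with x ((Equiv.Perm.decomposeFin.symm (q.succ, e)).symm 0) = N,
          facetDet s (fun a => kuhnVertex x (Equiv.Perm.decomposeFin.symm (q.succ, e))
            (a.val + 1)) = 0 := by
      intro q
      refine Finset.sum_eq_zero fun e _ => Finset.sum_eq_zero fun x hx => ?_
      simp only [Finset.mem_filter] at hx
      refine facetDet_eq_zero_of_one ((Equiv.Perm.decomposeFin.symm (q.succ, e)).symm 0) ?_ ?_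
      · intro h
        rw [Equiv.symm_apply_eq, Equiv.Perm.decomposeFin_symm_apply_zero] at h
        exact (Fin.succ_ne_zero q) h.symm
      · intro a
        refine h1 _ _ ?_
        simp [kuhnVertex, hx.2]
    rw [Finset.sum_eq_zero fun q _ => hrest q, add_zero]
    refine Finset.sum_congr rfl fun e _ => ?_
    have h00 : (Equiv.Perm.decomposeFin.symm ((0 : Fin (d + 1)), e)).symm 0 = 0 := by
      rw [Equiv.symm_apply_eq, Equiv.Perm.decomposeFin_symm_apply_zero]
    rw [h00]
    refine Finset.sum_bij' (fun x _ => Fin.tail x) (fun y _ => (Fin.cons N y : Fin (d + 1) → ℕ))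
      ?_ ?_ ?_ ?_ ?_
    · intro x hx
      simp only [Finset.mem_filter, Fintype.mem_piFinset] at hx ⊢
      exact fun j => hx.1 j.succ
    · intro y hy
      simp only [Finset.mem_filter, Fintype.mem_piFinset] at hy ⊢
      refine ⟨fun j => ?_, by simp⟩
      refine Fin.cases (by simp) (fun j => ?_) j
      simpa using hy j
    · intro x hx
      simp only [Finset.mem_filter] at hx
      rw [← hx.2, Fin.cons_self_tail]
    · intro y hy
      simp
    · intro x hx
      simp only [Finset.mem_filter] at hx
      rw [← facet_face N s h1, ← hx.2, Fin.cons_self_tail]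

/-! ### The Poincaré–Miranda theorem -/

/-- The Poincaré–Miranda theorem on the unit cube. -/
theorem poincareMiranda_fin {d : ℕ} (F : (Fin d → ℝ) → Fin d → ℝ) (hF : Continuous F)
    (h0 : ∀ i, ∀ y ∈ Icc (0 : Fin d → ℝ) 1, y i = 0 → F y i ≤ 0)
    (h1 : ∀ i, ∀ y ∈ Icc (0 : Fin d → ℝ) 1, y i = 1 → 0 ≤ F y i) :
    ∃ y ∈ Icc (0 : Fin d → ℝ) 1, F y = 0 := by
  classical
  have hcomp : IsCompact (Icc (0 : Fin d → ℝ) 1) := isCompact_Icc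
  obtain ⟨z, hz, hzmin⟩ := hcomp.exists_isMinOn ⟨0, by simp⟩
    (hF.norm.continuousOn (s := Icc (0 : Fin d → ℝ) 1))
  refine ⟨z, hz, ?_⟩
  by_contra hne
  have hpos : 0 < ‖F z‖ := norm_pos_iff.2 hne
  obtain ⟨δ, hδ, hunif⟩ := Metric.uniformContinuousOn_iff.1
    (hcomp.uniformContinuousOn_of_continuous hF.continuousOn) ‖F z‖ hpos
  obtain ⟨N, hN⟩ := exists_nat_one_div_lt hδ
  have hN0 : (0 : ℝ) < (N : ℝ) + 1 := by positivity
  -- Lattice points are clamped to the grid, so that the sign bits are defined on all of `ℕ^d`.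
  let P : (Fin d → ℕ) → Fin d → ℝ := fun x j => min (x j : ℝ) (N + 1) / (N + 1)
  have hP : ∀ x, P x ∈ Icc (0 : Fin d → ℝ) 1 := by
    intro x
    refine ⟨fun j => ?_, fun j => ?_⟩
    · simp only [P, Pi.zero_apply]; positivity
    · simp only [P, Pi.one_apply]
      rw [div_le_one hN0]
      exact min_le_right _ _
  let s : Fin d → (Fin d → ℕ) → ZMod 2 := fun i x =>
    if x i = 0 then 0 else if x i = N + 1 then 1 else if 0 ≤ F (P x) i then 1 else 0
  have hs0 : ∀ i x, s i x = 0 → F (P x) i ≤ 0 := by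
    intro i x h
    simp only [s] at h
    split_ifs at h with a b c
    · exact h0 i _ (hP x) (by simp [P, a, hN0.le])
    · exact absurd h (by decide)
    · exact absurd h (by decide)
    · exact (not_le.1 c).le
  have hs1 : ∀ i x, s i x = 1 → 0 ≤ F (P x) i := by
    intro i x h
    simp only [s] at h
    split_ifs at h with a b c
    · exact absurd h (by decide)
    · exact h1 i _ (hP x) (by simp [P, b, hN0.ne'])
    · exact c
    · exact absurd h (by decide)
  have hsum := sum_kuhnMat_det N s (fun i x h => by simp [s, h]) (fun i x h => by simp [s, h])
  have hne1 : (∑ x ∈ Fintype.piFinset fun _ : Fin d => Finset.range (N + 1),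
      ∑ ρ : Equiv.Perm (Fin d), (kuhnMat s x ρ).det) ≠ 0 := by
    rw [hsum]; exact one_ne_zero
  obtain ⟨x, _, hx⟩ := Finset.exists_ne_zero_of_sum_ne_zero hne1
  obtain ⟨ρ, _, hρ⟩ := Finset.exists_ne_zero_of_sum_ne_zero hx
  have hclose : ∀ k, dist (P x) (P (kuhnVertex x ρ k)) < δ := by
    intro k
    refine lt_of_le_of_lt ((dist_pi_le_iff (by positivity)).2 fun j => ?_) hN
    simp only [P, Real.dist_eq, ← sub_div, abs_div, abs_of_pos hN0]
    refine div_le_div_of_nonneg_right ?_ hN0.le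
    refine (abs_min_sub_min_le_max _ _ _ _).trans ?_
    simp only [kuhnVertex, sub_self, abs_zero]
    split_ifs <;> simp
  have hlt : ‖F (P x)‖ < ‖F z‖ := by
    refine (pi_norm_lt_iff hpos).2 fun i => ?_
    obtain ⟨⟨k, hk⟩, k', hk'⟩ := exists_of_kuhnMat_det_ne_zero hρ i
    have a1 := hs0 i _ hk
    have a2 := hs1 i _ hk'
    have b1 := lt_of_le_of_lt (dist_le_pi_dist _ _ i) (hunif _ (hP x) _ (hP _) (hclose k))
    have b2 := lt_of_le_of_lt (dist_le_pi_dist _ _ i) (hunif _ (hP x) _ (hP _) (hclose k'))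
    rw [Real.dist_eq, abs_lt] at b1 b2
    rw [Real.norm_eq_abs, abs_lt]
    constructor <;> linarith
  exact absurd (hzmin (hP x)) (not_le.2 hlt)

theorem poincareMiranda {ι : Type*} [Fintype ι] (F : (ι → ℝ) → ι → ℝ) (hF : Continuous F)
    (h0 : ∀ i, ∀ y : ι → ℝ, (∀ j, y j ∈ Icc (0 : ℝ) 1) → y i = 0 → F y i ≤ 0)
    (h1 : ∀ i, ∀ y : ι → ℝ, (∀ j, y j ∈ Icc (0 : ℝ) 1) → y i = 1 → 0 ≤ F y i) :
    ∃ y : ι → ℝ, (∀ j, y j ∈ Icc (0 : ℝ) 1) ∧ ∀ i, F y i = 0 := by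
  classical
  let e := Fintype.equivFin ι
  obtain ⟨y, hy, hFy⟩ := poincareMiranda_fin
    (fun y i => F (fun j => y (e j)) (e.symm i)) (by fun_prop)
    (fun i y hy hi => h0 _ _ (fun j => ⟨hy.1 _, hy.2 _⟩) (by simpa using hi))
    (fun i y hy hi => h1 _ _ (fun j => ⟨hy.1 _, hy.2 _⟩) (by simpa using hi))
  refine ⟨fun j => y (e j), fun j => ⟨hy.1 _, hy.2 _⟩, fun i => ?_⟩
  simpa using congrFun hFy (e i)

/-! ### Tracing the admissible sets and choosing the weights -/

/-- The admissible set of one biactive pair `(-μ_i, ν_i)`: the half-axis `μ_i = 0 ≤ ν_i` together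
with `C_i`. -/
def bent (C : Set (ℝ × ℝ)) : Set (ℝ × ℝ) := {q | q.1 = 0 ∧ 0 ≤ q.2} ∪ C

/-- A connected unbounded `C` in the third quadrant containing the origin is traced up to `ε` by a
curve that comes down the half-axis from `(0, R)` to the origin and then, staying in the third
quadrant, runs to a point of coordinate sum at most `-R`. -/
lemma exists_trace (C : Set (ℝ × ℝ)) (hsub : C ⊆ Iic (0 : ℝ) ×ˢ Iic (0 : ℝ))
    (hconn : IsConnected C) (hunb : ¬ Bornology.IsBounded C) (hzero : (0 : ℝ × ℝ) ∈ C)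
    (R ε : ℝ) (hR : 0 ≤ R) (hε : 0 < ε) :
    ∃ γ : ℝ → ℝ × ℝ, Continuous γ ∧ γ 0 = (0, R) ∧ (γ 1).1 + (γ 1).2 ≤ -R ∧
      (∀ u, (γ u).1 ≤ 0) ∧ (∀ u, (γ u).1 = 0 ∨ (γ u).2 ≤ 0) ∧
      ∀ u, Metric.infDist (γ u) (bent C) ≤ ε := by
  obtain ⟨c, hcC, hc⟩ : ∃ c ∈ C, c.1 + c.2 ≤ -R := by
    by_contra! hcon
    refine hunb ((Metric.isBounded_Icc ((-R, -R) : ℝ × ℝ) (0, 0)).subset fun q hq => ?_)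
    have h1 := hcon q hq
    obtain ⟨h2, h3⟩ := hsub hq
    simp only [mem_Iic] at h2 h3
    exact ⟨⟨by simp only; linarith, by simp only; linarith⟩, ⟨h2, h3⟩⟩
  have hthick : IsConnected (Metric.thickening ε C) := by
    refine ⟨hconn.nonempty.mono (Metric.self_subset_thickening hε C), ?_⟩
    rw [Metric.thickening_eq_biUnion_ball]
    -- Each ball meets the connected set `C` in its centre.
    have : (⋃ x ∈ C, Metric.ball x ε) = ⋃ x ∈ C, (C ∪ Metric.ball x ε) := by
      ext q
      simp only [mem_iUnion, mem_union, exists_prop]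
      constructor
      · rintro ⟨x, hx, hq⟩
        exact ⟨x, hx, Or.inr hq⟩
      · rintro ⟨x, hx, hq | hq⟩
        · exact ⟨q, hq, Metric.mem_ball_self hε⟩
        · exact ⟨x, hx, hq⟩
    rw [this, biUnion_eq_iUnion]
    refine isPreconnected_iUnion ⟨0, mem_iInter.2 fun x => Or.inl hzero⟩ fun x => ?_
    exact hconn.isPreconnected.union x.1 x.2 (Metric.mem_ball_self hε)
      (convex_ball x.1 ε).isPreconnected
  have hpath : IsPathConnected (Metric.thickening ε C) :=
    (Metric.isOpen_thickening.isConnected_iff_isPathConnected).1 hthick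
  obtain ⟨w, hw⟩ := hpath.joinedIn 0 (Metric.self_subset_thickening hε C hzero)
    c (Metric.self_subset_thickening hε C hcC)
  -- `r` retracts the plane onto the third quadrant without increasing distances.
  let r : ℝ × ℝ → ℝ × ℝ := fun q => (min q.1 0, min q.2 0)
  have hrC : ∀ q ∈ C, r q = q := by
    intro q hq
    obtain ⟨h2, h3⟩ := hsub hq
    exact Prod.ext (min_eq_left h2) (min_eq_left h3)
  have hrdist : ∀ q q', dist (r q) (r q') ≤ dist q q' := by
    intro q q'
    rw [Prod.dist_eq, Prod.dist_eq]
    refine max_le_max ?_ ?_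
    · simpa [r, Real.dist_eq] using abs_min_sub_min_le_max q.1 0 q'.1 0
    · simpa [r, Real.dist_eq] using abs_min_sub_min_le_max q.2 0 q'.2 0
  -- The path extended by constants stays at the origin while the half-axis is run through.
  have hw0 : ∀ u : ℝ, u ≤ 1 / 2 → r (w.extend (2 * u - 1)) = 0 := by
    intro u hu
    rw [w.extend_of_le_zero (by linarith), hrC _ hzero]
  let γ : ℝ → ℝ × ℝ := fun u => (0, R * max 0 (1 - 2 * u)) + r (w.extend (2 * u - 1))
  have hγ1 : ∀ u : ℝ, u ≤ 1 / 2 → γ u = (0, R * (1 - 2 * u)) := by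
    intro u hu
    simp only [γ, hw0 u hu, add_zero]
    rw [max_eq_right (by linarith)]
  have hγ2 : ∀ u : ℝ, 1 / 2 ≤ u → γ u = r (w.extend (2 * u - 1)) := by
    intro u hu
    simp only [γ]
    rw [max_eq_left (by linarith), mul_zero, Prod.mk_zero_zero, zero_add]
  refine ⟨γ, ?_, ?_, ?_, ?_, ?_, ?_⟩
  · have := w.continuous_extend
    simp only [γ, r]
    fun_prop
  · rw [hγ1 0 (by norm_num)]; simp
  · rw [hγ2 1 (by norm_num), w.extend_of_one_le (by norm_num), hrC c hcC]
    exact hc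
  · intro u
    simp [γ, r]
  · intro u
    rcases le_total u (1 / 2) with hu | hu
    · left; rw [hγ1 u hu]
    · right; rw [hγ2 u hu]; simp [r]
  · intro u
    rcases le_total u (1 / 2) with hu | hu
    · have hmem : γ u ∈ bent C := by
        left
        rw [hγ1 u hu]
        exact ⟨rfl, mul_nonneg hR (by linarith)⟩
      rw [Metric.infDist_zero_of_mem hmem]
      exact hε.le
    · have hmem : w.extend (2 * u - 1) ∈ Metric.thickening ε C := by
        have hrange : w.extend (2 * u - 1) ∈ range w := by
          rw [← w.extend_range]
          exact mem_range_self _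
        obtain ⟨t, ht⟩ := hrange
        rw [← ht]
        exact hw t
      obtain ⟨q, hqC, hq⟩ := Metric.mem_thickening_iff.1 hmem
      rw [hγ2 u hu]
      refine (Metric.infDist_le_dist_of_mem (show q ∈ bent C from Or.inr hqC)).trans ?_
      have := hrdist (w.extend (2 * u - 1)) q
      rw [hrC q hqC] at this
      exact this.trans hq.le

/-- The weight of the vertex `α` of the unit cube in the multilinear interpolation at `x`. -/
def cubeWeight {p : ℕ} (x : Fin p → ℝ) (α : Fin p → Bool) : ℝ :=
  ∏ i, if α i then x i else 1 - x i

lemma cubeWeight_sum {p : ℕ} (x : Fin p → ℝ) : ∑ α, cubeWeight x α = 1 := by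
  have := Finset.prod_univ_sum (fun _ : Fin p => (Finset.univ : Finset Bool))
    (fun i b => if b then x i else 1 - x i)
  simp only [Fintype.piFinset_univ] at this
  unfold cubeWeight
  rw [← this]
  simp

lemma cubeWeight_nonneg {p : ℕ} {x : Fin p → ℝ} (hx : ∀ i, x i ∈ Icc (0 : ℝ) 1)
    (α : Fin p → Bool) : 0 ≤ cubeWeight x α := by
  refine Finset.prod_nonneg fun i _ => ?_
  split_ifs
  · exact (hx i).1
  · linarith [(hx i).2]

lemma cubeWeight_eq_zero {p : ℕ} {x : Fin p → ℝ} {α : Fin p → Bool} (i : Fin p)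
    (h : (if α i then x i else 1 - x i) = 0) : cubeWeight x α = 0 :=
  Finset.prod_eq_zero (Finset.mem_univ i) h

/-- Pairs `(a α i, b α i)` attached to the vertices `α` of a cube and satisfying the sign pattern
of the branches have a convex combination whose `i`-th pair is admissible for every `i`. -/
theorem exists_weights {p : ℕ} (a b : (Fin p → Bool) → Fin p → ℝ)
    (ha : ∀ α i, a α i ≤ 0) (ha0 : ∀ α i, α i = false → a α i = 0)
    (hb : ∀ α i, α i = true → 0 ≤ b α i) (C : Fin p → Set (ℝ × ℝ))
    (hsub : ∀ i, C i ⊆ Iic (0 : ℝ) ×ˢ Iic (0 : ℝ)) (hclosed : ∀ i, IsClosed (C i))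
    (hconn : ∀ i, IsConnected (C i)) (hunb : ∀ i, ¬ Bornology.IsBounded (C i))
    (hzero : ∀ i, (0 : ℝ × ℝ) ∈ C i) :
    ∃ w : (Fin p → Bool) → ℝ, (∀ α, 0 ≤ w α) ∧ ∑ α, w α = 1 ∧
      ∀ i, (∑ α, w α * a α i, ∑ α, w α * b α i) ∈ bent (C i) := by
  let A : (Fin p → ℝ) → Fin p → ℝ := fun x i => ∑ α, cubeWeight x α * a α i
  let B : (Fin p → ℝ) → Fin p → ℝ := fun x i => ∑ α, cubeWeight x α * b α i
  have hwc : ∀ α : Fin p → Bool, Continuous fun x : Fin p → ℝ => cubeWeight x α := by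
    intro α
    unfold cubeWeight
    refine continuous_finsetProd _ fun i _ => ?_
    split_ifs <;> fun_prop
  have hA : ∀ i, Continuous fun x => A x i := fun i =>
    continuous_finsetSum _ fun α _ => (hwc α).mul continuous_const
  have hB : ∀ i, Continuous fun x => B x i := fun i =>
    continuous_finsetSum _ fun α _ => (hwc α).mul continuous_const
  let K : Set (Fin p → ℝ) := Set.univ.pi fun _ => Icc (0 : ℝ) 1
  have hK : IsCompact K := isCompact_univ_pi fun _ => isCompact_Icc
  have hKm : ∀ x, x ∈ K ↔ ∀ i, x i ∈ Icc (0 : ℝ) 1 := fun x => mem_univ_pi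
  have hAle : ∀ x ∈ K, ∀ i, A x i ≤ 0 := fun x hx i =>
    Finset.sum_nonpos fun α _ =>
      mul_nonpos_of_nonneg_of_nonpos (cubeWeight_nonneg ((hKm x).1 hx) α) (ha α i)
  have hA0 : ∀ x : Fin p → ℝ, ∀ i, x i = 0 → A x i = 0 := by
    intro x i hi
    refine Finset.sum_eq_zero fun α _ => ?_
    cases hα : α i
    · rw [ha0 α i hα, mul_zero]
    · rw [cubeWeight_eq_zero i (by simp [hα, hi]), zero_mul]
  have hB1 : ∀ x ∈ K, ∀ i, x i = 1 → 0 ≤ B x i := by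
    intro x hx i hi
    refine Finset.sum_nonneg fun α _ => ?_
    cases hα : α i
    · rw [cubeWeight_eq_zero i (by simp [hα, hi]), zero_mul]
    · exact mul_nonneg (cubeWeight_nonneg ((hKm x).1 hx) α) (hb α i hα)
  let R : Fin p → ℝ := fun i => ∑ α, |a α i + b α i|
  have hR : ∀ i, 0 ≤ R i := fun i => Finset.sum_nonneg fun α _ => abs_nonneg _
  have hAB : ∀ x ∈ K, ∀ i, |A x i + B x i| ≤ R i := by
    intro x hx i
    simp only [A, B, R, ← Finset.sum_add_distrib, ← mul_add]
    refine (Finset.abs_sum_le_sum_abs _ _).trans (Finset.sum_le_sum fun α _ => ?_)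
    have h0 := cubeWeight_nonneg ((hKm x).1 hx) α
    have h1 : cubeWeight x α ≤ 1 := by
      rw [← cubeWeight_sum x]
      exact Finset.single_le_sum (f := cubeWeight x)
        (fun β _ => cubeWeight_nonneg ((hKm x).1 hx) β) (Finset.mem_univ α)
    rw [abs_mul, abs_of_nonneg h0]
    exact mul_le_of_le_one_left (abs_nonneg _) h1
  have happrox : ∀ ε > 0, ∃ x ∈ K, ∀ i, Metric.infDist (A x i, B x i) (bent (C i)) ≤ ε := by
    intro ε hε
    choose γ hγc hγ0 hγ1 hγneg hγbent hγdist using fun i =>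
      exists_trace (C i) (hsub i) (hconn i) (hunb i) (hzero i) (R i) ε (hR i) hε
    -- Unknowns: the cube point `x` and one curve parameter `u i` per index. On the zero set of the
    -- `inr` equations the two entries of the maximum coincide.
    let F : (Fin p ⊕ Fin p → ℝ) → Fin p ⊕ Fin p → ℝ := fun y => Sum.elim
      (fun i => (1 - y (Sum.inl i)) * ((γ i (y (Sum.inr i))).1 - A (fun j => y (Sum.inl j)) i)
        + y (Sum.inl i) * max ((γ i (y (Sum.inr i))).1 - A (fun j => y (Sum.inl j)) i)
          (B (fun j => y (Sum.inl j)) i - (γ i (y (Sum.inr i))).2))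
      (fun i => A (fun j => y (Sum.inl j)) i + B (fun j => y (Sum.inl j)) i
        - ((γ i (y (Sum.inr i))).1 + (γ i (y (Sum.inr i))).2))
    have hFc : Continuous F := by
      refine continuous_pi fun k => ?_
      have hl : Continuous fun y : Fin p ⊕ Fin p → ℝ => fun j => y (Sum.inl j) := by fun_prop
      have hA' := fun i => (hA i).comp hl
      have hB' := fun i => (hB i).comp hl
      have hg := fun i => (hγc i).comp
        (continuous_apply (A := fun _ => ℝ) (Sum.inr i : Fin p ⊕ Fin p))
      simp only [Function.comp_def] at hA' hB' hg
      rcases k with i | i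
      · have h1 := hA' i
        have h2 := hB' i
        have h3 := hg i
        simp only [F, Sum.elim_inl]
        fun_prop
      · have h1 := hA' i
        have h2 := hB' i
        have h3 := hg i
        simp only [F, Sum.elim_inr]
        fun_prop
    have hzeroF : ∃ y : Fin p ⊕ Fin p → ℝ, (∀ j, y j ∈ Icc (0 : ℝ) 1) ∧ ∀ i, F y i = 0 := by
      refine poincareMiranda F hFc ?_ ?_
      · rintro (i | i) y hy hi
        · simp only [F, Sum.elim_inl]
          rw [hA0 _ i hi, hi]
          have := hγneg i (y (Sum.inr i))
          linarith
        · simp only [F, Sum.elim_inr]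
          rw [hi, hγ0 i]
          have := abs_le.1 (hAB _ ((hKm _).2 fun j => hy (Sum.inl j)) i)
          simp only
          linarith [this.2]
      · rintro (i | i) y hy hi
        · have hyK : (fun j => y (Sum.inl j)) ∈ K := (hKm _).2 fun j => hy _
          simp only [F, Sum.elim_inl]
          rw [hi]
          have h1 := hB1 _ hyK i hi
          have h2 := hAle _ hyK i
          have h3 : 0 ≤ max ((γ i (y (Sum.inr i))).1 - A (fun j => y (Sum.inl j)) i)
              (B (fun j => y (Sum.inl j)) i - (γ i (y (Sum.inr i))).2) := by
            rcases hγbent i (y (Sum.inr i)) with h | h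
            · exact le_max_of_le_left (by linarith)
            · exact le_max_of_le_right (by linarith)
          linarith
        · simp only [F, Sum.elim_inr]
          rw [hi]
          have := abs_le.1 (hAB _ ((hKm _).2 fun j => hy (Sum.inl j)) i)
          linarith [this.1, hγ1 i]
    obtain ⟨y, hy, hFy⟩ := hzeroF
    have hyK : (fun j => y (Sum.inl j)) ∈ K := (hKm _).2 fun j => hy _
    refine ⟨_, hyK, fun i => ?_⟩
    have e1 := hFy (Sum.inr i)
    have e2 := hFy (Sum.inl i)
    simp only [F, Sum.elim_inl, Sum.elim_inr] at e1 e2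
    rw [max_eq_left (by linarith)] at e2
    have e3 : (γ i (y (Sum.inr i))).1 = A (fun j => y (Sum.inl j)) i := by linarith
    have e4 : (γ i (y (Sum.inr i))).2 = B (fun j => y (Sum.inl j)) i := by linarith
    rw [← e3, ← e4]
    exact hγdist i _
  let Φ : (Fin p → ℝ) → ℝ := fun x => ∑ i, Metric.infDist (A x i, B x i) (bent (C i))
  have hΦ : Continuous Φ := continuous_finsetSum _ fun i _ =>
    (Metric.continuous_infDist_pt _).comp ((hA i).prodMk (hB i))
  obtain ⟨x, hx, hmin⟩ := hK.exists_isMinOn ⟨0, (hKm 0).2 fun _ => by simp⟩ hΦ.continuousOn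
  have hΦ0 : Φ x ≤ 0 := by
    refine le_of_forall_pos_le_add fun ε hε => ?_
    obtain ⟨x', hx', h'⟩ := happrox (ε / (p + 1)) (by positivity)
    have h1 : Φ x ≤ Φ x' := hmin hx'
    have h2 : Φ x' ≤ ∑ _i : Fin p, ε / (p + 1) := Finset.sum_le_sum fun i _ => h' i
    have h3 : ∑ _i : Fin p, ε / (p + 1) ≤ ε := by
      rw [Finset.sum_const, Finset.card_univ, Fintype.card_fin, nsmul_eq_mul, mul_div_assoc',
        div_le_iff₀ (by positivity)]
      nlinarith
    linarith
  refine ⟨cubeWeight x, cubeWeight_nonneg ((hKm x).1 hx), cubeWeight_sum x, fun i => ?_⟩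
  have hbc : IsClosed (bent (C i)) := by
    refine IsClosed.union ?_ (hclosed i)
    exact (isClosed_eq continuous_fst continuous_const).inter
      (isClosed_le continuous_const continuous_snd)
  have hne : (bent (C i)).Nonempty := ⟨0, Or.inr (hzero i)⟩
  rw [hbc.mem_iff_infDist_zero hne]
  refine le_antisymm ?_ Metric.infDist_nonneg
  refine le_trans ?_ hΦ0
  exact Finset.single_le_sum (f := fun i => Metric.infDist (A x i, B x i) (bent (C i)))
    (fun j _ => Metric.infDist_nonneg) (Finset.mem_univ i)

/-! ### Convex combinations of multipliers -/

lemma sum_smul_comb {ι κ E : Type*} [Fintype ι] [Fintype κ] [AddCommGroup E] [Module ℝ E]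
    (w : κ → ℝ) (c : κ → ι → ℝ) (v : ι → E) :
    ∑ i, (∑ α, w α * c α i) • v i = ∑ α, w α • ∑ i, c α i • v i := by
  simp only [Finset.sum_smul, Finset.smul_sum, mul_smul]
  exact Finset.sum_comm

/-- The weak stationarity system is stable under convex combinations of multipliers. -/
lemma MpvcWeakMult.comb {n l m p : ℕ} {κ : Type*} [Fintype κ] {f : Rn n → ℝ}
    {g : Fin l → Rn n → ℝ} {h : Fin m → Rn n → ℝ} {G H : Fin p → Rn n → ℝ} {xb : Rn n}
    {lam : κ → Fin l → ℝ} {eta : κ → Fin m → ℝ} {mu nu : κ → Fin p → ℝ}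
    (hW : ∀ α, MpvcWeakMult f g h G H xb (lam α) (eta α) (mu α) (nu α))
    {w : κ → ℝ} (hw : ∀ α, 0 ≤ w α) (hw1 : ∑ α, w α = 1) :
    MpvcWeakMult f g h G H xb (fun i => ∑ α, w α * lam α i) (fun i => ∑ α, w α * eta α i)
      (fun i => ∑ α, w α * mu α i) (fun i => ∑ α, w α * nu α i) := by
  have hzero : ∀ {c : κ → ℝ}, (∀ α, c α = 0) → ∑ α, w α * c α = 0 := fun hc =>
    Finset.sum_eq_zero fun α _ => by rw [hc, mul_zero]
  have hnonneg : ∀ {c : κ → ℝ}, (∀ α, 0 ≤ c α) → 0 ≤ ∑ α, w α * c α := fun hc =>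
    Finset.sum_nonneg fun α _ => mul_nonneg (hw α) (hc α)
  refine ⟨?_, fun i hi => hnonneg fun α => (hW α).2.1 i hi,
    fun i hi => hzero fun α => (hW α).2.2.1 i hi,
    fun i hi => hzero fun α => (hW α).2.2.2.1 i hi,
    fun i hi => hnonneg fun α => (hW α).2.2.2.2.1 i hi,
    fun i hi => hzero fun α => (hW α).2.2.2.2.2.1 i hi,
    fun i hi hi' => hnonneg fun α => (hW α).2.2.2.2.2.2 i hi hi'⟩
  have hf : gradient f xb = ∑ α, w α • gradient f xb := by
    rw [← Finset.sum_smul, hw1, one_smul]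
  simp only [sum_smul_comb]
  rw [hf, ← Finset.sum_add_distrib, ← Finset.sum_add_distrib, ← Finset.sum_add_distrib,
    ← Finset.sum_sub_distrib]
  refine Finset.sum_eq_zero fun α _ => ?_
  rw [← smul_add, ← smul_add, ← smul_add, ← smul_sub, (hW α).1, smul_zero]

/-- from A_α-stationarity for all α ∈ {0,1}^p one obtains weakly
stationary multipliers with, for every i ∈ I⁰⁰(x̄), either (μ_i = 0 ∧ ν_i ≥ 0)
or (−μ_i, ν_i) ∈ C_i. -/
theorem mpvc_AStat_all_implies_CSet_stat {n l m p : ℕ} (f : Rn n → ℝ) (g : Fin l → Rn n → ℝ)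
    (h : Fin m → Rn n → ℝ) (G H : Fin p → Rn n → ℝ) (xb : Rn n)
    (hf : Differentiable ℝ f) (hg : ∀ i, Differentiable ℝ (g i))
    (hh : ∀ i, Differentiable ℝ (h i)) (hG : ∀ i, Differentiable ℝ (G i))
    (hH : ∀ i, Differentiable ℝ (H i))
    (hfeas : xb ∈ MpvcFeasible g h G H)
    (C : Fin p → Set (ℝ × ℝ))
    (hCsub : ∀ i, C i ⊆ Set.Iic (0:ℝ) ×ˢ Set.Iic (0:ℝ))
    (hCclosed : ∀ i, IsClosed (C i))
    (hCconn : ∀ i, IsConnected (C i))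
    (hCunbdd : ∀ i, ¬ Bornology.IsBounded (C i))
    (hC0 : ∀ i, (0:ℝ × ℝ) ∈ C i)
    (hA : ∀ α : Fin p → ℝ, IsBinaryVec α → MpvcAStat f g h G H xb α) :
    ∃ lam eta mu nu, MpvcWeakMult f g h G H xb lam eta mu nu ∧
      ∀ i, G i xb = 0 → H i xb = 0 →
        (mu i = 0 ∧ 0 ≤ nu i) ∨ (-mu i, nu i) ∈ C i := by
  classical
  have hA' : ∀ α : Fin p → Bool, MpvcAStat f g h G H xb (fun i => if α i then 1 else 0) :=
    fun α => hA _ fun i => by by_cases hi : α i <;> simp [hi]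
  choose lam eta mu nu hW hmu hnu using hA'
  -- The pairs of indices that are not biactive are replaced by zero, which is always admissible.
  let B : Fin p → Prop := fun i => G i xb = 0 ∧ H i xb = 0
  obtain ⟨w, hw, hw1, hmem⟩ := exists_weights
    (fun α i => if B i then -mu α i else 0) (fun α i => if B i then nu α i else 0)
    (fun α i => by
      by_cases hi : B i
      · simpa [hi] using (hW α).2.2.2.2.1 i (Or.inr hi)
      · simp [hi])
    (fun α i hα => by
      by_cases hi : B i
      · simpa [hi] using hmu α i hi.1 hi.2 (by simp [hα])
      · simp [hi])
    (fun α i hα => by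
      by_cases hi : B i
      · simpa [hi] using hnu α i hi.1 hi.2 (by simp [hα])
      · simp [hi])
    C hCsub hCclosed hCconn hCunbdd hC0
  refine ⟨_, _, _, _, MpvcWeakMult.comb hW hw hw1, fun i hGi hHi => ?_⟩
  have hi : B i := ⟨hGi, hHi⟩
  have hq := hmem i
  simp only [hi, if_true, mul_neg, Finset.sum_neg_distrib] at hq
  rcases hq with ⟨h1, h2⟩ | hq
  · exact Or.inl ⟨neg_eq_zero.1 h1, h2⟩
  · exact Or.inr hq
end
end
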